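/- (Corollary 1, unanimous rejection group rule.) In the two-group voting model, for every j₁ ∈ S₁ and j₂ ∈ S₂, E[X_{j₁}·1_{G₁ ∪ G₂}] − E[X_{j₂}·1_{G₁ ∪ G₂}] = σ₁·f₁·(1 − F₂) − σ₂·f₂·(1 − F₁). -/

import Mathlib

open MeasureTheory ProbabilityTheory Real Set

/-- Density of the standard normal distribution. -/
noncomputable def stdPdf (y : ℝ) : ℝ := (Real.sqrt (2 * Real.pi))⁻¹ * Real.exp (-(y ^ 2) / 2)

/-- Cumulative distribution function of the standard normal distribution. -/
noncomputable def stdCdf (y : ℝ) : ℝ := ∫ x in Set.Iic y, stdPdf x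

lemma gaussianPDFReal_zero_one : gaussianPDFReal 0 1 = stdPdf := by
  ext y
  simp [gaussianPDFReal, stdPdf]

lemma measureReal_stdGaussian_Ici (a : ℝ) :
    (gaussianReal 0 1).real (Ici a) = 1 - stdCdf a := by
  have hIio : (gaussianReal 0 1).real (Iio a) = stdCdf a := by
    rw [measureReal_def, gaussianReal_apply_eq_integral 0 one_ne_zero,
      gaussianPDFReal_zero_one, ENNReal.toReal_ofReal, stdCdf, integral_Iic_eq_integral_Iio]
    refine integral_nonneg fun y => ?_
    rw [← gaussianPDFReal_zero_one]
    exact gaussianPDFReal_nonneg 0 1 y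
  rw [← hIio, ← probReal_compl_eq_one_sub measurableSet_Iio, compl_Iio]

lemma hasDerivAt_neg_stdPdf (y : ℝ) : HasDerivAt (fun z => -stdPdf z) (stdPdf y * y) y := by
  have h : HasDerivAt (fun z : ℝ => -(z ^ 2) / 2) (-y) y :=
    ((hasDerivAt_pow 2 y).neg.div_const 2).congr_deriv (by simp; ring)
  exact ((h.exp.const_mul (√(2 * π))⁻¹).neg).congr_deriv (by simp only [stdPdf]; ring)

lemma tendsto_stdPdf_atTop : Filter.Tendsto stdPdf Filter.atTop (nhds 0) := by
  have h : Filter.Tendsto (fun y : ℝ => y ^ 2 / 2) Filter.atTop Filter.atTop :=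
    (Filter.tendsto_pow_atTop two_ne_zero).atTop_div_const two_pos
  have := ((tendsto_exp_neg_atTop_nhds_zero).comp h).const_mul (√(2 * π))⁻¹
  rw [mul_zero] at this
  refine this.congr fun y => ?_
  simp [stdPdf, neg_div]

lemma integrable_id_gaussianReal (m : ℝ) (v : NNReal) :
    Integrable (fun y : ℝ => y) (gaussianReal m v) :=
  memLp_one_iff_integrable.mp (memLp_id_gaussianReal 1)

lemma integrable_stdPdf_mul_id : Integrable fun y => stdPdf y * y := by
  have h := integrable_id_gaussianReal 0 1
  rw [gaussianReal_of_var_ne_zero 0 one_ne_zero,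
    integrable_withDensity_iff_integrable_smul' (measurable_gaussianPDF 0 1)
      (ae_of_all _ fun _ => gaussianPDF_lt_top)] at h
  simpa [toReal_gaussianPDF, gaussianPDFReal_zero_one] using h

lemma setIntegral_id_stdGaussian_Ici (a : ℝ) :
    ∫ y in Ici a, y ∂(gaussianReal 0 1) = stdPdf a := by
  rw [← integral_indicator measurableSet_Ici, integral_gaussianReal_eq_integral_smul one_ne_zero,
    gaussianPDFReal_zero_one]
  have h : (fun y => stdPdf y • (Ici a).indicator (fun z => z) y)
      = (Ici a).indicator fun y => stdPdf y * y := by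
    ext y
    by_cases hy : y ∈ Ici a <;> simp [hy]
  rw [h, integral_indicator measurableSet_Ici, integral_Ici_eq_integral_Ioi,
    integral_Ioi_of_hasDerivAt_of_tendsto' (m := 0) (fun y _ => hasDerivAt_neg_stdPdf y)
      integrable_stdPdf_mul_id.integrableOn (by simpa using tendsto_stdPdf_atTop.neg)]
  ring

lemma gaussianReal_eq_map_stdGaussian (m s : ℝ) :
    gaussianReal m (s ^ 2).toNNReal = (gaussianReal 0 1).map fun y => m - s * y := by
  have h := gaussianReal_map_const_mul (μ := 0) (v := 1) s
  rw [← Function.comp_def (fun z => m - z) (fun y => s * y),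
    ← Measure.map_map (by fun_prop) (by fun_prop), h, gaussianReal_map_const_sub]
  congr 1
  · simp
  · ext
    simp [sq_nonneg]

lemma preimage_Iic_affine (m t : ℝ) {s : ℝ} (hs : 0 < s) :
    (fun y => m - s * y) ⁻¹' Iic t = Ici ((m - t) / s) := by
  ext y
  simp only [mem_preimage, mem_Iic, mem_Ici, div_le_iff₀ hs]
  constructor <;> intro h <;> linarith

lemma measureReal_gaussianReal_Iic (m t : ℝ) {s : ℝ} (hs : 0 < s) :
    (gaussianReal m (s ^ 2).toNNReal).real (Iic t) = 1 - stdCdf ((m - t) / s) := by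
  rw [gaussianReal_eq_map_stdGaussian, map_measureReal_apply (by fun_prop) measurableSet_Iic,
    preimage_Iic_affine m t hs, measureReal_stdGaussian_Ici]

lemma setIntegral_id_gaussianReal_Iic (m t : ℝ) {s : ℝ} (hs : 0 < s) :
    ∫ z in Iic t, z ∂(gaussianReal m (s ^ 2).toNNReal)
      = m * (1 - stdCdf ((m - t) / s)) - s * stdPdf ((m - t) / s) := by
  rw [gaussianReal_eq_map_stdGaussian,
    setIntegral_map measurableSet_Iic (by fun_prop) (by fun_prop), preimage_Iic_affine m t hs,
    integral_sub (integrable_const _) ((integrable_id_gaussianReal 0 1).integrableOn.const_mul s),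
    integral_const_mul, setIntegral_id_stdGaussian_Ici, setIntegral_const,
    measureReal_stdGaussian_Ici, smul_eq_mul]
  ring

section GroupAverage

variable {Ω ι : Type*} [MeasurableSpace Ω] {P : Measure Ω}
  {X : ι → Ω → ℝ} {m : ℝ} {v : NNReal}

lemma map_sum_eq_gaussianReal [IsProbabilityMeasure P] (hmeas : ∀ j, Measurable (X j))
    (hindep : iIndepFun X P)
    (hdist : ∀ j, P.map (X j) = gaussianReal m v) (S : Finset ι) :
    P.map (∑ j ∈ S, X j) = gaussianReal (S.card * m) (S.card * v) := by
  classical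
  induction S using Finset.induction_on with
  | empty =>
    simp only [Finset.sum_empty, Finset.card_empty, Nat.cast_zero, zero_mul,
      gaussianReal_zero_var]
    exact (Measure.map_const P (0 : ℝ)).trans (by simp)
  | insert j S hj ih =>
    rw [Finset.sum_insert hj, gaussianReal_add_gaussianReal_of_indepFun
      (hindep.indepFun_finsetSum_of_notMem hmeas hj).symm (hdist j) ih,
      Finset.card_insert_of_notMem hj]
    congr 1 <;> push_cast <;> ring

lemma map_average_eq_gaussianReal [IsProbabilityMeasure P] {σ : ℝ}
    (hmeas : ∀ j, Measurable (X j)) (hindep : iIndepFun X P)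
    (hdist : ∀ j, P.map (X j) = gaussianReal m (σ ^ 2).toNNReal) {S : Finset ι}
    (hS : 1 ≤ S.card) :
    P.map (fun ω => (S.card : ℝ)⁻¹ * ∑ j ∈ S, X j ω)
      = gaussianReal m ((σ / √S.card) ^ 2).toNNReal := by
  have hpos : (0 : ℝ) < S.card := by exact_mod_cast hS
  have hcomp : (fun ω => (S.card : ℝ)⁻¹ * ∑ j ∈ S, X j ω)
      = (fun y => (S.card : ℝ)⁻¹ * y) ∘ ∑ j ∈ S, X j := by
    ext ω
    simp
  rw [hcomp, ← Measure.map_map (by fun_prop) (by fun_prop),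
    map_sum_eq_gaussianReal hmeas hindep hdist, gaussianReal_map_const_mul]
  congr 1
  · field_simp
  · ext
    rw [Real.coe_toNNReal _ (sq_nonneg _), div_pow, Real.sq_sqrt hpos.le]
    simp only [NNReal.coe_mul, NNReal.coe_mk, NNReal.coe_natCast, Real.coe_toNNReal _ (sq_nonneg σ)]
    field_simp

/-- The joint law of one summand and the total does not depend on the summand. -/
lemma setIntegral_eq_of_mem [IsProbabilityMeasure P] (hmeas : ∀ j, Measurable (X j))
    (hindep : iIndepFun X P)
    (hdist : ∀ j, P.map (X j) = gaussianReal m v) {S : Finset ι} {j : ι} (hj : j ∈ S)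
    {B : Set ℝ} (hB : MeasurableSet B) :
    ∫ ω in {ω | ∑ i ∈ S, X i ω ∈ B}, X j ω ∂P
      = ∫ p in {p : ℝ × ℝ | p.1 + p.2 ∈ B}, p.1
        ∂((gaussianReal m v).prod (gaussianReal ((S.card - 1 : ℕ) * m) ((S.card - 1 : ℕ) * v))) := by
  classical
  have hsum : Measurable (∑ i ∈ S.erase j, X i) := by fun_prop
  have hlaw := (hindep.indepFun_finsetSum_of_notMem hmeas
    (Finset.notMem_erase j S)).symm.map_prod_eq_prod_map_map (hmeas j).aemeasurable
      hsum.aemeasurable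
  rw [hdist, map_sum_eq_gaussianReal hmeas hindep hdist, Finset.card_erase_of_mem hj] at hlaw
  have hset : MeasurableSet {p : ℝ × ℝ | p.1 + p.2 ∈ B} :=
    (measurable_fst.add measurable_snd) hB
  rw [← hlaw, setIntegral_map hset (by fun_prop) ((hmeas j).prodMk hsum).aemeasurable]
  congr 2
  ext ω
  simp [Finset.sum_apply, Finset.add_sum_erase S (fun i => X i ω) hj]

lemma integrable_of_map_eq_gaussianReal {Z : Ω → ℝ} (hZ : Measurable Z)
    (h : P.map Z = gaussianReal m v) : Integrable Z P := by
  have := integrable_id_gaussianReal m v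
  rw [← h] at this
  exact this.comp_measurable hZ

lemma setIntegral_eq_setIntegral_average [IsProbabilityMeasure P] (hmeas : ∀ j, Measurable (X j))
    (hindep : iIndepFun X P)
    (hdist : ∀ j, P.map (X j) = gaussianReal m v) {S : Finset ι} {j : ι} (hj : j ∈ S) (t : ℝ) :
    ∫ ω in {ω | (S.card : ℝ)⁻¹ * ∑ i ∈ S, X i ω ≤ t}, X j ω ∂P
      = ∫ ω in {ω | (S.card : ℝ)⁻¹ * ∑ i ∈ S, X i ω ≤ t},
          (S.card : ℝ)⁻¹ * ∑ i ∈ S, X i ω ∂P := by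
  have hpos : (0 : ℝ) < S.card := by exact_mod_cast Finset.card_pos.mpr ⟨j, hj⟩
  have hB : MeasurableSet {y : ℝ | (S.card : ℝ)⁻¹ * y ≤ t} :=
    measurableSet_le (by fun_prop) (by fun_prop)
  have hsame : ∀ i ∈ S, ∫ ω in {ω | (S.card : ℝ)⁻¹ * ∑ k ∈ S, X k ω ≤ t}, X i ω ∂P
      = ∫ ω in {ω | (S.card : ℝ)⁻¹ * ∑ k ∈ S, X k ω ≤ t}, X j ω ∂P := fun i hi =>
    (setIntegral_eq_of_mem hmeas hindep hdist hi hB).trans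
      (setIntegral_eq_of_mem hmeas hindep hdist hj hB).symm
  rw [integral_const_mul, integral_finsetSum _ fun i _ =>
    (integrable_of_map_eq_gaussianReal (hmeas i) (hdist i)).integrableOn,
    Finset.sum_congr rfl hsame, Finset.sum_const, nsmul_eq_mul, inv_mul_cancel_left₀ (ne_of_gt hpos)]

/-- On the event that both groups reject, the opinion of a member of the first group integrates to
a product, by independence of the two groups. -/
lemma setIntegral_inter_eq_mul (hmeas : ∀ j, Measurable (X j)) (hindep : iIndepFun X P)
    {S T : Finset ι} (hST : Disjoint S T) {j : ι} (hj : j ∈ S) (c d t u : ℝ) :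
    ∫ ω in {ω | c * ∑ i ∈ S, X i ω ≤ t} ∩ {ω | d * ∑ i ∈ T, X i ω ≤ u}, X j ω ∂P
      = (∫ ω in {ω | c * ∑ i ∈ S, X i ω ≤ t}, X j ω ∂P)
        * P.real {ω | d * ∑ i ∈ T, X i ω ≤ u} := by
  have hS : MeasurableSet {ω | c * ∑ i ∈ S, X i ω ≤ t} :=
    measurableSet_le (by fun_prop) (by fun_prop)
  have hT : MeasurableSet {ω | d * ∑ i ∈ T, X i ω ≤ u} :=
    measurableSet_le (by fun_prop) (by fun_prop)
  have hS' : MeasurableSet {x : S → ℝ | c * ∑ i, x i ≤ t} :=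
    measurableSet_le (by fun_prop) (by fun_prop)
  have hT' : MeasurableSet {x : T → ℝ | d * ∑ i, x i ≤ u} :=
    measurableSet_le (by fun_prop) (by fun_prop)
  have hmul := (hindep.indepFun_finset S T hST hmeas).integral_fun_comp_mul_comp
    (f := {x : S → ℝ | c * ∑ i, x i ≤ t}.indicator fun x => x ⟨j, hj⟩)
    (g := {x : T → ℝ | d * ∑ i, x i ≤ u}.indicator fun _ => (1 : ℝ))
    (by fun_prop) (by fun_prop)
    (((measurable_pi_apply _).indicator hS').aestronglyMeasurable)
    ((measurable_const.indicator hT').aestronglyMeasurable)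
  have hS_sum (ω : Ω) : ∑ i : S, X i ω = ∑ i ∈ S, X i ω := Finset.sum_coe_sort S fun i => X i ω
  have hT_sum (ω : Ω) : ∑ i : T, X i ω = ∑ i ∈ T, X i ω := Finset.sum_coe_sort T fun i => X i ω
  simp only [indicator_apply, mem_ofPred_eq, hS_sum, hT_sum] at hmul
  rw [← integral_indicator (hS.inter hT), ← integral_indicator hS, ← integral_indicator_one hT]
  simp only [indicator_apply, mem_inter_iff, mem_ofPred_eq, Pi.one_apply]
  rw [← hmul]
  congr 1
  ext ω
  split_ifs <;> simp_all

lemma setIntegral_union_eq [IsProbabilityMeasure P] {σ : ℝ} (hσ : 0 < σ)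
    (hmeas : ∀ j, Measurable (X j))
    (hindep : iIndepFun X P) (hdist : ∀ j, P.map (X j) = gaussianReal m (σ ^ 2).toNNReal)
    {S T : Finset ι} (hST : Disjoint S T) (hT : 1 ≤ T.card) {j : ι} (hj : j ∈ S) (t u : ℝ) :
    ∫ ω in {ω | t < (S.card : ℝ)⁻¹ * ∑ i ∈ S, X i ω} ∪ {ω | u < (T.card : ℝ)⁻¹ * ∑ i ∈ T, X i ω},
        X j ω ∂P
      = m - (m * (1 - stdCdf ((m - t) / (σ / √S.card)))
          - σ / √S.card * stdPdf ((m - t) / (σ / √S.card)))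
        * (1 - stdCdf ((m - u) / (σ / √T.card))) := by
  have hS : 1 ≤ S.card := Finset.card_pos.mpr ⟨j, hj⟩
  have hsS : 0 < σ / √S.card := div_pos hσ (Real.sqrt_pos.mpr (by exact_mod_cast hS))
  have hsT : 0 < σ / √T.card := div_pos hσ (Real.sqrt_pos.mpr (by exact_mod_cast hT))
  have hmS : MeasurableSet {ω | (S.card : ℝ)⁻¹ * ∑ i ∈ S, X i ω ≤ t} :=
    measurableSet_le (by fun_prop) (by fun_prop)
  have hmT : MeasurableSet {ω | (T.card : ℝ)⁻¹ * ∑ i ∈ T, X i ω ≤ u} :=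
    measurableSet_le (by fun_prop) (by fun_prop)
  have hunion : {ω | t < (S.card : ℝ)⁻¹ * ∑ i ∈ S, X i ω}
        ∪ {ω | u < (T.card : ℝ)⁻¹ * ∑ i ∈ T, X i ω}
      = ({ω | (S.card : ℝ)⁻¹ * ∑ i ∈ S, X i ω ≤ t}
        ∩ {ω | (T.card : ℝ)⁻¹ * ∑ i ∈ T, X i ω ≤ u})ᶜ := by
    ext ω
    simp only [mem_union, mem_compl_iff, mem_inter_iff, mem_ofPred_eq, not_and_or, not_le]
  have hmean : ∫ ω, X j ω ∂P = m := by
    rw [← integral_id_gaussianReal (μ := m) (v := (σ ^ 2).toNNReal), ← hdist j,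
      integral_map (hmeas j).aemeasurable (by fun_prop)]
  have hprob : P.real {ω | (T.card : ℝ)⁻¹ * ∑ i ∈ T, X i ω ≤ u}
      = 1 - stdCdf ((m - u) / (σ / √T.card)) := by
    rw [← measureReal_gaussianReal_Iic m u hsT,
      ← map_average_eq_gaussianReal hmeas hindep hdist hT,
      map_measureReal_apply (by fun_prop) measurableSet_Iic]
    rfl
  have hpart : ∫ ω in {ω | (S.card : ℝ)⁻¹ * ∑ i ∈ S, X i ω ≤ t}, X j ω ∂P
      = m * (1 - stdCdf ((m - t) / (σ / √S.card)))
        - σ / √S.card * stdPdf ((m - t) / (σ / √S.card)) := by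
    rw [setIntegral_eq_setIntegral_average hmeas hindep hdist hj,
      ← setIntegral_id_gaussianReal_Iic m t hsS,
      ← map_average_eq_gaussianReal hmeas hindep hdist hS,
      setIntegral_map measurableSet_Iic (by fun_prop) (by fun_prop)]
    rfl
  rw [hunion, setIntegral_compl (hmS.inter hmT)
    (integrable_of_map_eq_gaussianReal (hmeas j) (hdist j)), hmean,
    setIntegral_inter_eq_mul hmeas hindep hST hj, hprob, hpart]

end GroupAverage

/-- Corollary 1, unanimous rejection group rule: for every `j₁ ∈ S₁` and `j₂ ∈ S₂`,
`E[X_{j₁}·1_{G₁ ∪ G₂}] − E[X_{j₂}·1_{G₁ ∪ G₂}] = σ₁·f₁·(1 − F₂) − σ₂·f₂·(1 − F₁)`. -/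
theorem comparative_increment_unanimous_rejection
    {Ω ι : Type*} [MeasureSpace Ω] [IsProbabilityMeasure (ℙ : Measure Ω)]
    (μ σ : ℝ) (hσ : 0 < σ)
    (X : ι → Ω → ℝ) (hmeas : ∀ j, Measurable (X j))
    (hindep : iIndepFun X ℙ)
    (hdist : ∀ j, Measure.map (X j) ℙ = gaussianReal μ ((σ ^ 2).toNNReal))
    (S₁ S₂ : Finset ι) (hdisj : Disjoint S₁ S₂)
    (g₁ g₂ : ℕ) (hcard₁ : S₁.card = g₁) (hcard₂ : S₂.card = g₂)
    (hg₁ : 1 ≤ g₁) (hg₂ : 1 ≤ g₂)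
    (t₁ t₂ : ℝ)
    (A₁ A₂ : Ω → ℝ)
    (hA₁ : A₁ = fun ω => (g₁ : ℝ)⁻¹ * ∑ j ∈ S₁, X j ω)
    (hA₂ : A₂ = fun ω => (g₂ : ℝ)⁻¹ * ∑ j ∈ S₂, X j ω)
    :
    ∀ j₁ ∈ S₁, ∀ j₂ ∈ S₂,
      (∫ ω in {ω | t₁ < A₁ ω} ∪ {ω | t₂ < A₂ ω}, X j₁ ω) - (∫ ω in {ω | t₁ < A₁ ω} ∪ {ω | t₂ < A₂ ω}, X j₂ ω) =
        (σ / Real.sqrt g₁) * stdPdf ((μ - t₁) / (σ / Real.sqrt g₁)) * (1 - stdCdf ((μ - t₂) / (σ / Real.sqrt g₂))) - (σ / Real.sqrt g₂) * stdPdf ((μ - t₂) / (σ / Real.sqrt g₂)) * (1 - stdCdf ((μ - t₁) / (σ / Real.sqrt g₁))) := by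
  intro j₁ hj₁ j₂ hj₂
  subst hcard₁ hcard₂ hA₁ hA₂
  have h₂ := setIntegral_union_eq hσ hmeas hindep hdist hdisj.symm hg₁ hj₂ t₂ t₁
  rw [union_comm] at h₂
  rw [setIntegral_union_eq hσ hmeas hindep hdist hdisj hg₂ hj₁, h₂]
  ring
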